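/- Let d ≥ 1, let K̃ : I^d → ℝ be integrable with ∫_{I^d} K̃ dλ = 1, and for a function g ∈ Γ_{v,I^d} with Borel density ġ define Θ′(g) := ∫_{I^d} ġ K̃ dλ. Then for every v > 0 there exists δ > 0 such that [1−δ, 1+δ] ⊆ Θ′(Γ_{v,I^d}); that is, the image of Γ_{v,I^d} under Θ′ contains a nondegenerate closed interval centered at 1 (indeed Θ′(Γ_{v,I^d}) is an interval containing [ρ^{-1}, ρ] for any ρ > 1 with max(h(ρ), h(ρ^{-1})) ≤ 1/v). -/

import Mathlib

open MeasureTheory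
open scoped ENNReal

/-- The centered unit cube `I^d = [-1/2, 1/2]^d`. -/
def cube (d : ℕ) : Set (Fin d → ℝ) :=
  Set.Icc (fun _ => -(1 / 2 : ℝ)) fun _ => (1 / 2 : ℝ)

/-- `h(x) = x log x - x + 1` for `x > 0`, `h(0) = 1`, `h(x) = ∞` for `x < 0`
(note `Real.log 0 = 0` in Lean, so the formula also gives the value `1` at `0`). -/
noncomputable def hfun (x : ℝ) : ℝ≥0∞ :=
  if x < 0 then ⊤ else ENNReal.ofReal (x * Real.log x - x + 1)

/-- The limit set `Γ_{v,I^d}`: functions `g` on `I^d` with a Borel density `ġ`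
satisfying `∫_{I^d} h(ġ) dλ ≤ 1/v` and `g(s) = ∫_{[s,1/2]} ġ dλ` for all `s ∈ I^d`. -/
def Gam (d : ℕ) (v : ℝ) : Set ((Fin d → ℝ) → ℝ) :=
  {g | ∃ gdot : (Fin d → ℝ) → ℝ, Measurable gdot ∧
      (∫⁻ s in cube d, hfun (gdot s)) ≤ ENNReal.ofReal (1 / v) ∧
      ∀ s ∈ cube d, g s = ∫ u in Set.Icc s (fun _ => (1 / 2 : ℝ)), gdot u}

lemma cube_volume (d : ℕ) : volume (cube d) = 1 := by
  unfold cube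
  rw [Real.volume_Icc_pi]
  norm_num

lemma const_mem {d : ℕ} (K : (Fin d → ℝ) → ℝ) (hK1 : (∫ s in cube d, K s) = 1)
    (v r : ℝ) (hr : hfun r ≤ ENNReal.ofReal (1 / v)) :
    ∃ gdot : (Fin d → ℝ) → ℝ, Measurable gdot ∧
        (∫⁻ s in cube d, hfun (gdot s)) ≤ ENNReal.ofReal (1 / v) ∧
        r = ∫ s in cube d, gdot s * K s := by
  refine ⟨fun _ => r, measurable_const, ?_, ?_⟩
  · simpa [cube_volume] using hr
  · rw [integral_const_mul, hK1, mul_one]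

lemma hreal_convex : ConvexOn ℝ (Set.Ici (0 : ℝ)) (fun x => x * Real.log x - x + 1) := by
  have h := (Real.convexOn_mul_log.sub (concaveOn_id (convex_Ici (0 : ℝ)))).add_const 1
  exact h

theorem image_Gam_contains_interval {d : ℕ} (hd : 1 ≤ d)
    (K : (Fin d → ℝ) → ℝ)
    (hK : Integrable K (volume.restrict (cube d)))
    (hK1 : (∫ s in cube d, K s) = 1)
    (v : ℝ) (hv : 0 < v) :
    -- the image of `Γ_{v,I^d}` under `Θ'(g) = ∫_{I^d} ġ K̃ dλ` (each `g ∈ Γ_{v,I^d}`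
    -- being represented by a Borel density `ġ`) contains `[1-δ, 1+δ]` for some `δ > 0`
    (∃ δ > (0 : ℝ), Set.Icc (1 - δ) (1 + δ) ⊆
      {r : ℝ | ∃ gdot : (Fin d → ℝ) → ℝ, Measurable gdot ∧
        (∫⁻ s in cube d, hfun (gdot s)) ≤ ENNReal.ofReal (1 / v) ∧
        r = ∫ s in cube d, gdot s * K s}) ∧
    -- indeed it contains `[ρ⁻¹, ρ]` for any `ρ > 1` with `max (h ρ) (h ρ⁻¹) ≤ 1/v`
    (∀ ρ : ℝ, 1 < ρ → hfun ρ ≤ ENNReal.ofReal (1 / v) →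
      hfun ρ⁻¹ ≤ ENNReal.ofReal (1 / v) →
      Set.Icc ρ⁻¹ ρ ⊆
        {r : ℝ | ∃ gdot : (Fin d → ℝ) → ℝ, Measurable gdot ∧
          (∫⁻ s in cube d, hfun (gdot s)) ≤ ENNReal.ofReal (1 / v) ∧
          r = ∫ s in cube d, gdot s * K s}) := by
  constructor
  · have hc : Filter.Tendsto (fun x : ℝ => x * Real.log x - x + 1) (nhds 1) (nhds 0) := by
      have : Continuous (fun x : ℝ => x * Real.log x - x + 1) :=
        (Real.continuous_mul_log.sub continuous_id).add continuous_const
      simpa using this.tendsto 1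
    have h1 : ∀ᶠ x in nhds (1 : ℝ), hfun x ≤ ENNReal.ofReal (1 / v) := by
      filter_upwards [hc.eventually (gt_mem_nhds (show (0 : ℝ) < 1 / v by positivity)),
        lt_mem_nhds (show (0 : ℝ) < 1 by norm_num)] with x hx hx0
      rw [hfun, if_neg (not_lt.mpr hx0.le)]
      exact ENNReal.ofReal_le_ofReal hx.le
    obtain ⟨δ, hδ, hball⟩ := Metric.nhds_basis_closedBall.eventually_iff.mp h1
    refine ⟨δ, hδ, fun r hr => const_mem K hK1 v r (hball ?_)⟩
    rwa [Real.closedBall_eq_Icc]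
  · intro ρ hρ hA hB r hr
    apply const_mem K hK1 v r
    have hρ0 : 0 < ρ := by linarith
    have hi0 : 0 < ρ⁻¹ := by positivity
    have hr0 : 0 < r := hi0.trans_le hr.1
    have hv0 : 0 ≤ 1 / v := by positivity
    rw [hfun, if_neg (not_lt.mpr hρ0.le), ENNReal.ofReal_le_ofReal_iff hv0] at hA
    rw [hfun, if_neg (not_lt.mpr hi0.le), ENNReal.ofReal_le_ofReal_iff hv0] at hB
    rw [hfun, if_neg (not_lt.mpr hr0.le)]
    apply ENNReal.ofReal_le_ofReal
    exact (hreal_convex.le_max_of_mem_Icc hi0.le hρ0.le hr).trans (max_le hB hA)
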